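/- Let π be a Lipschitz integer with N(π) = p a rational prime with p ≥ 13, and let n ≥ 1 and 1 ≤ k ≤ n. If C is an additive subgroup of H(ℤ)_π^n of cardinality (p²)^k (an (n,k) linear code) that corrects all errors of Lipschitz weight 2 or less, then (p²)^{n−k} ≥ 32n² + 8n + 1. -/

import Mathlib

open Quaternion

/-- The set `{δ * π : δ ∈ H(ℤ)}`, as an additive subgroup of the Lipschitz
integers `ℍ[ℤ]`.  Two Lipschitz integers are right congruent modulo `π` iff
their difference lies in this subgroup. -/
def lipMultiples (π : ℍ[ℤ]) : AddSubgroup ℍ[ℤ] where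
  carrier := Set.range (fun δ => δ * π)
  zero_mem' := ⟨0, zero_mul π⟩
  add_mem' := by rintro _ _ ⟨a, rfl⟩ ⟨b, rfl⟩; exact ⟨a + b, add_mul a b π⟩
  neg_mem' := by rintro _ ⟨a, rfl⟩; exact ⟨-a, neg_mul a π⟩

/-- `H(ℤ)_π`: the Lipschitz integers modulo right congruence modulo `π`. -/
abbrev LipMod (π : ℍ[ℤ]) := ℍ[ℤ] ⧸ lipMultiples π

/-- The Lipschitz weight of a class `x ∈ H(ℤ)_π`: the least value of
`|a₀| + |a₁| + |a₂| + |a₃|` over all representatives `a₀ + a₁e₁ + a₂e₂ + a₃e₃` of `x`. -/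
noncomputable def lipWt (π : ℍ[ℤ]) (x : LipMod π) : ℕ :=
  sInf {m | ∃ q : ℍ[ℤ], (QuotientAddGroup.mk q : LipMod π) = x ∧
    m = q.re.natAbs + q.imI.natAbs + q.imJ.natAbs + q.imK.natAbs}

/-- The Lipschitz weight of a vector over `H(ℤ)_π` is the sum of the Lipschitz
weights of its components. -/
noncomputable def lipWtVec (π : ℍ[ℤ]) {n : ℕ} (v : Fin n → LipMod π) : ℕ :=
  ∑ i, lipWt π (v i)

/-- A code `C ⊆ H(ℤ)_π^n` corrects all errors of Lipschitz weight `t` or less: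
any two distinct vectors of Lipschitz weight at most `t` lie in distinct cosets of `C`. -/
def CorrectsLip (π : ℍ[ℤ]) {n : ℕ} (C : AddSubgroup (Fin n → LipMod π)) (t : ℕ) : Prop :=
  ∀ u v : Fin n → LipMod π, lipWtVec π u ≤ t → lipWtVec π v ≤ t → u - v ∈ C → u = v

/-!
Write the error patterns of weight at most 2 over `H(ℤ)` as the points of the `ℓ¹` ball of radius 2
in `ℤ^(4n)`; there are `2d² + 2d + 1 = 32n² + 8n + 1` of them, with `d = 4n`. A nonzero quaternion
of `ℓ¹` norm at most 4 has norm at most 10 or equal to 16, hence is not a multiple of `π` when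
`N(π)` is a prime `p ≥ 13`; so these patterns stay distinct modulo `π`, and the correction property
puts them in distinct cosets of `C`. Right multiplication by `π` has determinant `N(π)²`, so
`H(ℤ)_π` has `p²` elements and there are `(p²)^(n-k)` cosets.
-/

open Finset

/-- The `ℓ¹` ball of radius `t` about the origin in `ℤ^ι`, cut out of the cube `[-t, t]^ι` so as to
be a `Finset`. -/
noncomputable def l1Ball (ι : Type*) [Fintype ι] [DecidableEq ι] (t : ℕ) : Finset (ι → ℤ) :=
  {v ∈ Fintype.piFinset fun _ => Icc (-t : ℤ) t | ∑ i, (v i).natAbs ≤ t}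

section L1Ball

variable {ι κ : Type*} [Fintype ι] [DecidableEq ι] [Fintype κ] [DecidableEq κ]

lemma mem_l1Ball {t : ℕ} {v : ι → ℤ} : v ∈ l1Ball ι t ↔ ∑ i, (v i).natAbs ≤ t := by
  simp only [l1Ball, mem_filter, Fintype.mem_piFinset, mem_Icc, and_iff_right_iff_imp]
  intro h i
  have hi : (v i).natAbs ≤ ∑ j, (v j).natAbs :=
    single_le_sum_of_canonicallyOrdered (f := fun j => (v j).natAbs) (mem_univ i)
  omega

lemma card_l1Ball_congr (e : ι ≃ κ) (t : ℕ) : #(l1Ball ι t) = #(l1Ball κ t) :=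
  card_equiv (e.arrowCongr (Equiv.refl ℤ)) fun v => by
    simp [mem_l1Ball, e.symm.sum_comp fun i => (v i).natAbs]

lemma card_l1Ball_fin_succ (d t : ℕ) :
    #(l1Ball (Fin (d + 1)) t) = ∑ a ∈ Icc (-t : ℤ) t, #(l1Ball (Fin d) (t - a.natAbs)) := by
  rw [← card_sigma]
  refine card_bij' (fun v _ => ⟨v 0, Fin.tail v⟩) (fun x _ => Fin.cons x.1 x.2) ?_ ?_ ?_ ?_
  · intro v hv
    simp only [mem_l1Ball, Fin.sum_univ_succ] at hv
    simp only [mem_sigma, mem_Icc, mem_l1Ball, Fin.tail]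
    omega
  · rintro ⟨a, w⟩ h
    simp only [mem_sigma, mem_Icc, mem_l1Ball] at h
    simp only [mem_l1Ball, Fin.sum_univ_succ, Fin.cons_zero, Fin.cons_succ]
    omega
  · simp
  · simp

lemma card_l1Ball_zero : #(l1Ball ι 0) = 1 :=
  card_eq_one.2 ⟨0, by ext v; simp [mem_l1Ball, funext_iff]⟩

lemma card_l1Ball_fin_one (d : ℕ) : #(l1Ball (Fin d) 1) = 2 * d + 1 := by
  induction d with
  | zero => rfl
  | succ d ih =>
    have hIcc : Icc (-1 : ℤ) 1 = {-1, 0, 1} := rfl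
    have hsum : #(l1Ball (Fin (d + 1)) 1) = 1 + (#(l1Ball (Fin d) 1) + 1) := by
      simp [card_l1Ball_fin_succ, hIcc, card_l1Ball_zero]
    rw [hsum, ih]
    ring

lemma card_l1Ball_fin_two (d : ℕ) : #(l1Ball (Fin d) 2) = 2 * d ^ 2 + 2 * d + 1 := by
  induction d with
  | zero => rfl
  | succ d ih =>
    have hIcc : Icc (-2 : ℤ) 2 = {-2, -1, 0, 1, 2} := rfl
    have hsum : #(l1Ball (Fin (d + 1)) 2) =
        1 + (#(l1Ball (Fin d) 1) + (#(l1Ball (Fin d) 2) + (#(l1Ball (Fin d) 1) + 1))) := by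
      simp [card_l1Ball_fin_succ, hIcc, card_l1Ball_zero]
    rw [hsum, ih, card_l1Ball_fin_one]
    ring

lemma card_l1Ball_two :
    #(l1Ball ι 2) = 2 * Fintype.card ι ^ 2 + 2 * Fintype.card ι + 1 := by
  rw [card_l1Ball_congr (Fintype.equivFin ι), card_l1Ball_fin_two]

end L1Ball

-- An arbitrary `Module ℤ M` instance, because the one on `ℍ[ℤ]` is not reducibly
-- `AddCommGroup.toIntModule`.
lemma index_range_eq_natAbs_det {M : Type*} [AddCommGroup M] [inst : Module ℤ M] [Module.Free ℤ M]
    [Module.Finite ℤ M] {f : M →ₗ[ℤ] M} (hf : Function.Injective f) :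
    f.range.toAddSubgroup.index = (LinearMap.det f).natAbs := by
  obtain rfl : inst = AddCommGroup.toIntModule M := Subsingleton.elim _ _
  exact (Submodule.natAbs_det_equiv f.range (LinearEquiv.ofInjective f hf)).symm

/-- The basis `1, i, j, k` of the Hamilton quaternions: `QuaternionAlgebra.basisOneIJK`, stated for
`ℍ[R]` so that its module structure is the one `LinearMap.mulRight` uses. -/
noncomputable def quaternionBasis (R : Type*) [CommRing R] : Module.Basis (Fin 4) R ℍ[R] :=
  QuaternionAlgebra.basisOneIJK (-1) 0 (-1)

section Determinant

variable {R : Type*} [CommRing R]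

lemma quaternionBasis_repr (q : ℍ[R]) :
    (quaternionBasis R).repr q = ![q.re, q.imI, q.imJ, q.imK] :=
  rfl

lemma coe_quaternionBasis :
    ⇑(quaternionBasis R) = ![⟨1, 0, 0, 0⟩, ⟨0, 1, 0, 0⟩, ⟨0, 0, 1, 0⟩, ⟨0, 0, 0, 1⟩] := by
  funext i
  rw [Module.Basis.apply_eq_iff]
  ext j
  rw [quaternionBasis_repr]
  fin_cases i <;> fin_cases j <;> simp

lemma toMatrix_quaternion_mulRight (q : ℍ[R]) :
    LinearMap.toMatrix (quaternionBasis R) (quaternionBasis R) (LinearMap.mulRight R q) =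
      !![q.re, -q.imI, -q.imJ, -q.imK;
         q.imI, q.re, q.imK, -q.imJ;
         q.imJ, -q.imK, q.re, q.imI;
         q.imK, q.imJ, -q.imI, q.re] := by
  ext i j
  rw [LinearMap.toMatrix_apply, LinearMap.mulRight_apply, quaternionBasis_repr,
    re_mul, imI_mul, imJ_mul, imK_mul, coe_quaternionBasis]
  fin_cases i <;> fin_cases j <;> simp

lemma det_quaternion_mulRight (q : ℍ[R]) :
    LinearMap.det (LinearMap.mulRight R q) = normSq q ^ 2 := by
  rw [← LinearMap.det_toMatrix (quaternionBasis R), toMatrix_quaternion_mulRight, normSq_def']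
  simp [Matrix.det_succ_row_zero, Fin.sum_univ_succ, Fin.succAbove]
  ring

end Determinant

lemma lipMultiples_eq_range_mulRight (π : ℍ[ℤ]) :
    lipMultiples π = (LinearMap.mulRight ℤ π).range.toAddSubgroup :=
  rfl

lemma card_lipMod {π : ℍ[ℤ]} (hπ : π ≠ 0) : (Nat.card (LipMod π) : ℤ) = normSq π ^ 2 := by
  have hinj : Function.Injective (LinearMap.mulRight ℤ π) := mul_left_injective₀ hπ
  rw [← AddSubgroup.index_eq_card, lipMultiples_eq_range_mulRight, index_range_eq_natAbs_det hinj,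
    det_quaternion_mulRight, Int.natCast_natAbs, abs_of_nonneg (sq_nonneg _)]

/-- The `ℓ¹` norm on `H(ℤ)`; `lipWt π` is the induced quotient norm on `H(ℤ)_π`. -/
def lipNorm (q : ℍ[ℤ]) : ℕ :=
  q.re.natAbs + q.imI.natAbs + q.imJ.natAbs + q.imK.natAbs

lemma lipNorm_sub_le (q r : ℍ[ℤ]) : lipNorm (q - r) ≤ lipNorm q + lipNorm r := by
  have hre := Int.natAbs_sub_le q.re r.re
  have hI := Int.natAbs_sub_le q.imI r.imI
  have hJ := Int.natAbs_sub_le q.imJ r.imJ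
  have hK := Int.natAbs_sub_le q.imK r.imK
  simp only [lipNorm, re_sub, imI_sub, imJ_sub, imK_sub]
  linarith

lemma lipWt_mk_le (π q : ℍ[ℤ]) : lipWt π (q : LipMod π) ≤ lipNorm q :=
  Nat.sInf_le ⟨q, rfl, rfl⟩

lemma normSq_dvd_of_mem_lipMultiples {π q : ℍ[ℤ]} (hq : q ∈ lipMultiples π) :
    normSq π ∣ normSq q := by
  obtain ⟨δ, rfl⟩ := hq
  exact ⟨normSq δ, by rw [map_mul, mul_comm]⟩

lemma sum_four_sq_le_ten_or_eq_sixteen {a b c d : ℕ} (h : a + b + c + d ≤ 4) :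
    a ^ 2 + b ^ 2 + c ^ 2 + d ^ 2 ≤ 10 ∨ a ^ 2 + b ^ 2 + c ^ 2 + d ^ 2 = 16 := by
  have check : ∀ a ≤ 4, ∀ b ≤ 4 - a, ∀ c ≤ 4 - a - b, ∀ d ≤ 4 - a - b - c,
      a ^ 2 + b ^ 2 + c ^ 2 + d ^ 2 ≤ 10 ∨ a ^ 2 + b ^ 2 + c ^ 2 + d ^ 2 = 16 := by
    decide
  exact check a (by omega) b (by omega) c (by omega) d (by omega)

lemma normSq_eq_sum_natAbs_sq (q : ℍ[ℤ]) :
    normSq q =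
      ((q.re.natAbs ^ 2 + q.imI.natAbs ^ 2 + q.imJ.natAbs ^ 2 + q.imK.natAbs ^ 2 : ℕ) : ℤ) := by
  simp [normSq_def']

lemma normSq_le_ten_or_eq_sixteen {q : ℍ[ℤ]} (hq : lipNorm q ≤ 4) :
    normSq q ≤ 10 ∨ normSq q = 16 := by
  rw [normSq_eq_sum_natAbs_sq]
  exact_mod_cast sum_four_sq_le_ten_or_eq_sixteen hq

lemma eq_zero_of_mem_lipMultiples {π q : ℍ[ℤ]} (hπ : 11 ≤ normSq π) (hπ' : normSq π ≠ 16)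
    (hmem : q ∈ lipMultiples π) (hq : lipNorm q ≤ 4) : q = 0 := by
  have hdvd := normSq_dvd_of_mem_lipMultiples hmem
  rw [← normSq_eq_zero]
  by_contra hne
  have hle : normSq π ≤ normSq q := Int.le_of_dvd (normSq_nonneg.lt_of_ne' hne) hdvd
  have h16 : normSq q = 16 := (normSq_le_ten_or_eq_sixteen hq).resolve_left (by omega)
  rw [h16] at hdvd hle
  interval_cases normSq π <;> omega

/-- The integer coordinates of a vector over `H(ℤ)`, identifying `H(ℤ)^n` with `ℤ^(4n)`; the pair
`(i, c)` indexes the `c`-th coordinate, in the order `1, e₁, e₂, e₃`, of the `i`-th entry. -/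
def lipCoords (n : ℕ) : (Fin n → ℍ[ℤ]) ≃ (Fin n × Fin 4 → ℤ) :=
  ((Equiv.refl _).arrowCongr (equivTuple ℤ)).trans (Equiv.curry _ _ _).symm

lemma sum_natAbs_lipCoords {n : ℕ} (q : Fin n → ℍ[ℤ]) :
    ∑ j, (lipCoords n q j).natAbs = ∑ i, lipNorm (q i) := by
  simp [lipCoords, Fintype.sum_prod_type, Fin.sum_univ_four, lipNorm]

section Packing

variable {π : ℍ[ℤ]} {n t : ℕ}

lemma lipWtVec_mk_le (q : Fin n → ℍ[ℤ]) :
    lipWtVec π (fun i => (q i : LipMod π)) ≤ ∑ i, lipNorm (q i) :=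
  sum_le_sum fun i _ => lipWt_mk_le π (q i)

lemma eq_of_mk_eq_of_lipNorm_le (hπ : ∀ q ∈ lipMultiples π, lipNorm q ≤ 2 * t → q = 0)
    {q r : ℍ[ℤ]} (hq : lipNorm q ≤ t) (hr : lipNorm r ≤ t) (h : (q : LipMod π) = r) : q = r := by
  rw [QuotientAddGroup.eq_iff_sub_mem] at h
  exact sub_eq_zero.1 (hπ _ h ((lipNorm_sub_le q r).trans (by omega)))

theorem card_l1Ball_le_index (hπ : ∀ q ∈ lipMultiples π, lipNorm q ≤ 2 * t → q = 0)
    {C : AddSubgroup (Fin n → LipMod π)} [C.FiniteIndex] (hC : CorrectsLip π C t) :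
    #(l1Ball (Fin n × Fin 4) t) ≤ C.index := by
  let coset (v : Fin n × Fin 4 → ℤ) : (Fin n → LipMod π) ⧸ C :=
    QuotientAddGroup.mk fun i => ((lipCoords n).symm v i : LipMod π)
  have hsum {v : Fin n × Fin 4 → ℤ} (hv : v ∈ l1Ball (Fin n × Fin 4) t) :
      ∑ i, lipNorm ((lipCoords n).symm v i) ≤ t := by
    simpa [← sum_natAbs_lipCoords] using mem_l1Ball.1 hv
  have hnorm {v : Fin n × Fin 4 → ℤ} (hv : v ∈ l1Ball (Fin n × Fin 4) t) (i : Fin n) :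
      lipNorm ((lipCoords n).symm v i) ≤ t :=
    (single_le_sum_of_canonicallyOrdered (f := fun i => lipNorm ((lipCoords n).symm v i))
      (mem_univ i)).trans (hsum hv)
  have hinj : Set.InjOn coset (l1Ball (Fin n × Fin 4) t) := by
    intro v hv w hw hvw
    have hmk := hC _ _ ((lipWtVec_mk_le _).trans (hsum hv)) ((lipWtVec_mk_le _).trans (hsum hw))
      (QuotientAddGroup.eq_iff_sub_mem.1 hvw)
    refine (lipCoords n).symm.injective (funext fun i => ?_)
    exact eq_of_mk_eq_of_lipNorm_le hπ (hnorm hv i) (hnorm hw i) (congrFun hmk i)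
  have := Fintype.ofFinite ((Fin n → LipMod π) ⧸ C)
  calc #(l1Ball (Fin n × Fin 4) t) ≤ Fintype.card ((Fin n → LipMod π) ⧸ C) :=
        card_le_card_of_injOn coset (fun _ _ => mem_univ _) hinj
    _ = C.index := (C.index_eq_card.trans Nat.card_eq_fintype_card).symm

end Packing

lemma index_le_pow_sub {A : Type*} [AddGroup A] {C : AddSubgroup A} {b n k : ℕ} (hb : 0 < b)
    (hA : Nat.card A = b ^ n) (hC : Nat.card C = b ^ k) : C.index ≤ b ^ (n - k) := by
  refine Nat.le_of_mul_le_mul_right ?_ (pow_pos hb k)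
  calc C.index * b ^ k = b ^ n := by rw [← hC, C.index_mul_card, hA]
    _ ≤ b ^ (n - k + k) := Nat.pow_le_pow_right hb le_tsub_add
    _ = b ^ (n - k) * b ^ k := pow_add ..

theorem sphere_packing_lipschitz_wt_two_general {π : ℍ[ℤ]} {m n k : ℕ} (hm : m ≠ 0)
    (hN : normSq π = m) (hmin : ∀ q ∈ lipMultiples π, lipNorm q ≤ 4 → q = 0)
    {C : AddSubgroup (Fin n → LipMod π)} (hcard : Nat.card C = (m ^ 2) ^ k)
    (hcorr : CorrectsLip π C 2) :
    32 * n ^ 2 + 8 * n + 1 ≤ (m ^ 2) ^ (n - k) := by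
  have hπ : π ≠ 0 := by
    rintro rfl
    exact hm (by simpa using hN.symm)
  have hMod : Nat.card (LipMod π) = m ^ 2 := by
    exact_mod_cast hN ▸ card_lipMod hπ
  have : Finite (LipMod π) := Nat.finite_of_card_ne_zero (by simp [hMod, hm])
  have hVec : Nat.card (Fin n → LipMod π) = (m ^ 2) ^ n := by simp [Nat.card_fun, hMod]
  calc 32 * n ^ 2 + 8 * n + 1 = #(l1Ball (Fin n × Fin 4) 2) := by
        rw [card_l1Ball_two, Fintype.card_prod, Fintype.card_fin, Fintype.card_fin]
        ring
    _ ≤ C.index := card_l1Ball_le_index hmin hcorr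
    _ ≤ (m ^ 2) ^ (n - k) := index_le_pow_sub (by positivity) hVec hcard

/-- An `(n, k)` linear code over `H(ℤ)_π` (`N(π) = p` a prime with `p ≥ 13`)
correcting all errors of Lipschitz weight 2 or less satisfies
`(p²)^(n-k) ≥ 32n² + 8n + 1`. -/
theorem sphere_packing_lipschitz_wt_two (π : ℍ[ℤ]) (p : ℕ) (hp : p.Prime) (hp13 : 13 ≤ p)
    (hN : Quaternion.normSq π = (p : ℤ))
    (n k : ℕ) (hn : 1 ≤ n) (hk : 1 ≤ k) (hkn : k ≤ n)
    (C : AddSubgroup (Fin n → LipMod π))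
    (hcard : Nat.card C = (p ^ 2) ^ k)
    (hcorr : CorrectsLip π C 2) :
    32 * n ^ 2 + 8 * n + 1 ≤ (p ^ 2) ^ (n - k) := by
  have h16 : p ≠ 16 := by rintro rfl; norm_num at hp
  exact sphere_packing_lipschitz_wt_two_general hp.ne_zero hN
    (fun _ => eq_zero_of_mem_lipMultiples (by omega) (by omega)) hcard hcorr
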